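/- arXiv:1705.06372 — 2 statements merged into one kernel-verified Lean document; each statement's English description precedes it below -/
import Mathlib

section
/- Let q = 2^h with h > 5 and let A be the point set produced by the q/16-construction with data α₁, α₂, α₃, α₄, α, β₁, β₂, β₃ and S = {x ∈ F_q : Tr(α_i x) = 0 for i = 1,...,4}. Then for every s ∈ S and every k ∈ F_2, the projectivity of PG(2,q) given by (x:y:z) ↦ (x : kα₄x + y : sx + z) maps A onto itself; these q/8 projectivities form a group of elations with axis the line X = 0 stabilising A. In particular A admits a group of elations of order q/8. -/
open scoped Classical

noncomputable section

variable {K : Type*} [Field K]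

/-- The absolute trace-style sum `x + x² + x⁴ + ⋯ + x^(2^(h-1))`
(it lands in the prime subfield `F₂` when `|K| = 2^h`). -/
def Tr (h : ℕ) (x : K) : K := ∑ i ∈ Finset.range h, x ^ 2 ^ i

/-- `F₂`-independence of a tuple of elements of a field of characteristic two:
no nontrivial combination with coefficients `0`/`1` vanishes. -/
def F2Indep {n : ℕ} (v : Fin n → K) : Prop :=
  ∀ c : Fin n → K, (∀ i, c i = 0 ∨ c i = 1) → ∑ i, c i * v i = 0 → ∀ i, c i = 0

/-- The `F₂`-span of a tuple of elements of a field of characteristic two. -/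
def F2Span {n : ℕ} (v : Fin n → K) : Set K :=
  {x | ∃ c : Fin n → K, (∀ i, c i = 0 ∨ c i = 1) ∧ x = ∑ i, c i * v i}

/-- `α·S` for an additive subgroup `S` of the field. -/
def smulSub (α : K) (S : AddSubgroup K) : AddSubgroup K :=
  S.map (AddMonoidHom.mulLeft α)

/-- Points of `PG(2,q)`: one-dimensional subspaces of `K³`. -/
abbrev Pt (K : Type*) [Field K] := Projectivization K (Fin 3 → K)

/-- The point `(a : b : c)` of `PG(2,q)`. -/
def pt3 (a b c : K) (habc : ¬(a = 0 ∧ b = 0 ∧ c = 0)) : Pt K :=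
  Projectivization.mk K ![a, b, c] (fun h0 => habc
    ⟨by simpa using congrFun h0 0, by simpa using congrFun h0 1, by simpa using congrFun h0 2⟩)

/-- The point `(a : b)` of `PG(1,q)`. -/
def pt2 (a b : K) (hab : ¬(a = 0 ∧ b = 0)) : Projectivization K (Fin 2 → K) :=
  Projectivization.mk K ![a, b] (fun h0 => hab
    ⟨by simpa using congrFun h0 0, by simpa using congrFun h0 1⟩)

/-- An `F₂`-linear set of points of `PG(1,q)`: in characteristic two, the
`F₂`-subspaces of `K²` are exactly its additive subgroups. -/
def IsF2Linear (T : Set (Projectivization K (Fin 2 → K))) : Prop :=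
  ∃ U : AddSubgroup (Fin 2 → K),
    T = {P | ∃ u : Fin 2 → K, ∃ hu : u ≠ 0, u ∈ U ∧ Projectivization.mk K u hu = P}

/-- Lines of `PG(2,q)`: two-dimensional subspaces of `K³`. -/
def IsLine (L : Submodule K (Fin 3 → K)) : Prop := Module.finrank K L = 2

/-- Incidence of a point with a line. -/
def OnLine (P : Pt K) (L : Submodule K (Fin 3 → K)) : Prop := P.submodule ≤ L

/-- The number of points of `A` lying on the line `L`. -/
def secantCount (A : Set (Pt K)) (L : Submodule K (Fin 3 → K)) : ℕ :=
  {P ∈ A | OnLine P L}.ncard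

/-- A KM-arc of type `t`: `q+t` points meeting every line in `0`, `2` or `t` points. -/
def IsKMArc (q t : ℕ) (A : Set (Pt K)) : Prop :=
  A.ncard = q + t ∧ ∀ L : Submodule K (Fin 3 → K), IsLine L →
    secantCount A L = 0 ∨ secantCount A L = 2 ∨ secantCount A L = t

/-- The projectivity of `PG(2,q)` induced by an element of `GL(3,q)`. -/
def projMap (f : (Fin 3 → K) ≃ₗ[K] (Fin 3 → K)) : Pt K → Pt K :=
  Projectivization.map f.toLinearMap f.injective

/-- `f` induces an elation with axis `L` and centre `R`: it fixes every point of `L`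
and maps every line through `R` to itself. -/
def IsElation (f : (Fin 3 → K) ≃ₗ[K] (Fin 3 → K)) (L : Submodule K (Fin 3 → K))
    (R : Pt K) : Prop :=
  IsLine L ∧ OnLine R L ∧ (∀ P : Pt K, OnLine P L → projMap f P = P) ∧
    ∀ M : Submodule K (Fin 3 → K), IsLine M → OnLine R M →
      ∀ P : Pt K, OnLine P M → OnLine (projMap f P) M

/-- `f` induces an elation with axis `L` (for some centre on `L`). -/
def IsElationAxis (f : (Fin 3 → K) ≃ₗ[K] (Fin 3 → K)) (L : Submodule K (Fin 3 → K)) : Prop :=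
  ∃ R : Pt K, IsElation f L R

/-- The projectivity induced by `f` stabilises the point set `A`. -/
def Stabilises (f : (Fin 3 → K) ≃ₗ[K] (Fin 3 → K)) (A : Set (Pt K)) : Prop :=
  projMap f '' A = A

/-- `N` lies on every `t`-secant of `A` (i.e. `N` is the `t`-nucleus). -/
def IsNucleus (t : ℕ) (A : Set (Pt K)) (N : Pt K) : Prop :=
  ∀ L : Submodule K (Fin 3 → K), IsLine L → secantCount A L = t → OnLine N L

/-- An elation KM-arc of type `t` with `t`-nucleus `N` and elation line `linf`:
for every `t`-secant `L ≠ linf`, the group of elations with axis `linf` stabilising `A`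
acts transitively on `A ∩ L`. -/
def IsElationKMArc (q t : ℕ) (A : Set (Pt K)) (N : Pt K)
    (linf : Submodule K (Fin 3 → K)) : Prop :=
  IsKMArc q t A ∧ IsLine linf ∧ OnLine N linf ∧ IsNucleus t A N ∧
    ∀ L : Submodule K (Fin 3 → K), IsLine L → secantCount A L = t → L ≠ linf →
      ∀ P ∈ A, OnLine P L → ∀ Q ∈ A, OnLine Q L →
        ∃ f : (Fin 3 → K) ≃ₗ[K] (Fin 3 → K),
          IsElationAxis f linf ∧ Stabilises f A ∧ projMap f P = Q

/-- A translation KM-arc with translation line `l`: the group of elations with axis `l`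
stabilising `A` acts transitively on `A \ l`. -/
def IsTranslationKMArc (A : Set (Pt K)) (l : Submodule K (Fin 3 → K)) : Prop :=
  IsLine l ∧ ∀ P ∈ A, ¬OnLine P l → ∀ Q ∈ A, ¬OnLine Q l →
    ∃ f : (Fin 3 → K) ≃ₗ[K] (Fin 3 → K),
      IsElationAxis f l ∧ Stabilises f A ∧ projMap f P = Q

/-- The line `X = 0` of `PG(2,q)`. -/
def lineX0 (K : Type*) [Field K] : Submodule K (Fin 3 → K) :=
  LinearMap.ker (LinearMap.proj (R := K) (φ := fun _ : Fin 3 => K) 0)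

/-- The line `Y = aX` of `PG(2,q)`. -/
def lineYaX (a : K) : Submodule K (Fin 3 → K) where
  carrier := {v | v 1 = a * v 0}
  add_mem' := by
    intro v w hv hw
    simp only [Set.mem_setOf_eq, Pi.add_apply] at hv hw ⊢
    rw [hv, hw]; ring
  zero_mem' := by simp
  smul_mem' := by
    intro c v hv
    simp only [Set.mem_setOf_eq, Pi.smul_apply, smul_eq_mul] at hv ⊢
    rw [hv]; ring

/-- The point set of the `q/8`-construction (Theorem 4.4 of the paper), built from
`F₂`-independent `a 0, a 1, a 2` and coset representatives `b 0, b 1, b 2`. -/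
def q8Arc (h : ℕ) (a b : Fin 3 → K) : Set (Pt K) :=
  {P | ∃ x : K, (∀ i, Tr h (a i ^ 2 * x) = 0) ∧ P = pt3 0 1 x (by simp)}
    ∪ {P | ∃ l : Fin 3 → K, (∀ i, l i = 0 ∨ l i = 1) ∧ ∃ s : K, (∀ i, Tr h (a i * s) = 0) ∧
        P = pt3 1 (l 0 * a 0 + l 1 * a 1 + l 2 * a 2)
          ((l 0 + l 1 + l 2 + l 1 * l 2) * b 0 + (l 1 + l 2 + l 0 * l 2) * b 1
            + (l 2 + l 0 * l 1) * b 2 + s) (by simp)}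

/-- The point set of the `q/16`-construction (Theorem 5.2 of the paper). -/
def q16Arc (h : ℕ) (a : Fin 4 → K) (α : K) (b : Fin 3 → K) : Set (Pt K) :=
  {P | ∃ x : K, Tr h (a 0 * (a 0 + a 3) * x) = 0 ∧ Tr h (a 1 * (a 1 + a 3) * x) = 0 ∧
      Tr h (a 2 * (a 2 + a 3) * x) = 0 ∧ Tr h (a 3 * α * x) = 1 ∧ P = pt3 0 1 x (by simp)}
    ∪ {P | ∃ l : Fin 4 → K, (∀ i, l i = 0 ∨ l i = 1) ∧ ∃ s : K, (∀ i, Tr h (a i * s) = 0) ∧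
        P = pt3 1 (l 0 * a 0 + l 1 * a 1 + l 2 * a 2 + l 3 * a 3)
          ((l 0 + l 1 + l 2 + l 1 * l 2) * b 0 + (l 1 + l 2 + l 0 * l 2) * b 1
            + (l 2 + l 0 * l 1) * b 2 + s) (by simp)}

/-- The semilinear collineation of `PG(2,q)` sending the point spanned by `v`
to the point spanned by `M (ψ ∘ v)`. -/
def frobMap (ψ : K ≃+* K) (M : (Fin 3 → K) ≃ₗ[K] (Fin 3 → K)) (P : Pt K) : Pt K :=
  Projectivization.mk K (M fun i => ψ (P.rep i)) (by
    rw [LinearEquiv.map_ne_zero_iff]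
    intro h0
    apply P.rep_nonzero
    funext i
    have h2 : P.rep i = 0 := ψ.injective (by rw [map_zero]; exact congrFun h0 i)
    simpa using h2)


lemma Tr_add_aux [CharP K 2] (h : ℕ) (x y : K) : Tr h (x + y) = Tr h x + Tr h y := by
  unfold Tr
  rw [← Finset.sum_add_distrib]
  refine Finset.sum_congr rfl fun i _ => ?_
  haveI : Fact (Nat.Prime 2) := ⟨Nat.prime_two⟩
  exact add_pow_char_pow x y 2 i

lemma Tr_zero_aux (h : ℕ) : Tr h (0 : K) = 0 := by
  unfold Tr
  refine Finset.sum_eq_zero fun i _ => ?_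
  simp

/-- the trace takes values in `{0,1}` -/
lemma Tr_mem_aux [Fintype K] [CharP K 2] (h : ℕ) (hcard : Fintype.card K = 2 ^ h) (x : K) :
    Tr h x = 0 ∨ Tr h x = 1 := by
  have h1 : Tr h x ^ 2 = Tr h x := by
    have e1 : Tr h x ^ 2 = ∑ i ∈ Finset.range h, x ^ 2 ^ (i + 1) := by
      unfold Tr
      haveI : Fact (Nat.Prime 2) := ⟨Nat.prime_two⟩
      rw [sum_pow_char]
      refine Finset.sum_congr rfl fun i _ => ?_
      rw [← pow_mul, pow_succ]
    have e2 := Finset.sum_range_succ' (fun i => x ^ 2 ^ i) h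
    rw [Finset.sum_range_succ] at e2
    have e3 : x ^ 2 ^ h = x := by rw [← hcard]; exact FiniteField.pow_card x
    simp only [e3, pow_zero, pow_one] at e2
    rw [e1]
    exact (add_right_cancel e2).symm
  have h2 : Tr h x * (Tr h x - 1) = 0 := by linear_combination h1
  rcases mul_eq_zero.mp h2 with h3 | h3
  · exact Or.inl h3
  · exact Or.inr (sub_eq_zero.mp h3)

/-- the trace is not identically zero -/
lemma Tr_ne_aux [Fintype K] (h : ℕ) (hh : 0 < h) (hcard : Fintype.card K = 2 ^ h) :
    ∃ x : K, Tr h x ≠ 0 := by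
  by_contra! hc
  let p : Polynomial K := ∑ i ∈ Finset.range h, Polynomial.X ^ 2 ^ i
  have hp0 : p = 0 := by
    apply Polynomial.eq_zero_of_natDegree_lt_card_of_eval_eq_zero' p Finset.univ
    · intro x _
      have := hc x
      simpa [p, Polynomial.eval_finset_sum, Tr] using this
    · rw [Finset.card_univ, hcard]
      refine lt_of_le_of_lt (b := 2 ^ (h - 1)) ?_ (Nat.pow_lt_pow_right (by norm_num) (by omega))
      refine Polynomial.natDegree_sum_le_of_forall_le _ _ fun i hi => ?_
      rw [Polynomial.natDegree_X_pow]
      have := Finset.mem_range.mp hi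
      exact Nat.pow_le_pow_right (by norm_num) (by omega)
  have hcf : p.coeff 1 = 1 := by
    simp only [p, Polynomial.finset_sum_coeff, Polynomial.coeff_X_pow]
    rw [Finset.sum_eq_single 0]
    · simp
    · intro i _ hi
      rw [if_neg]
      exact (Nat.one_lt_pow hi (by norm_num)).ne
    · intro h0
      exact absurd (Finset.mem_range.mpr hh) h0
  rw [hp0] at hcf
  simp at hcf

/-- The kernel set has `q/16` elements. -/
lemma card_S_aux [Fintype K] [CharP K 2] (h : ℕ) (hh : 0 < h) (hcard : Fintype.card K = 2 ^ h)
    (a : Fin 4 → K) (b : Fin 3 → K) (ha : a 3 ≠ 0)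
    (htr : ∀ (i : Fin 4) (j : Fin 3),
      Tr h (a i * b j) = if (i : ℕ) = (j : ℕ) then 1 else 0) :
    Nat.card {s : K // ∀ i, Tr h (a i * s) = 0} * 16 = 2 ^ h := by
  let φ : K →+ (Fin 4 → K) :=
    { toFun := fun x i => Tr h (a i * x)
      map_zero' := by funext i; simp [Tr_zero_aux]
      map_add' := by intro x y; funext i; simp [mul_add, Tr_add_aux] }
  have hφ : ∀ x i, φ x i = Tr h (a i * x) := fun _ _ => rfl
  have h11 : (1 : K) + 1 = 0 := CharTwo.add_self_eq_zero 1
  have hb' : ∀ (c : K), (c = 0 ∨ c = 1) → ∀ i j, Tr h (a i * (c * b j)) =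
      c * Tr h (a i * b j) := by
    rintro c (rfl | rfl) i j
    · simp [Tr_zero_aux]
    · simp
  have hrange : (φ.range : Set (Fin 4 → K)) =
      ((Fintype.piFinset fun _ : Fin 4 => ({0, 1} : Finset K)) : Set (Fin 4 → K)) := by
    ext w
    simp only [SetLike.mem_coe, AddMonoidHom.mem_range, Finset.mem_coe, Fintype.mem_piFinset,
      Finset.mem_insert, Finset.mem_singleton]
    constructor
    · rintro ⟨x, rfl⟩ i
      exact Tr_mem_aux h hcard _
    · intro hw
      -- an element with prescribed last coordinate
      have hx : ∃ x : K, Tr h (a 3 * x) = w 3 := by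
        rcases hw 3 with h3 | h3
        · exact ⟨0, by simp [h3, Tr_zero_aux]⟩
        · obtain ⟨y, hy⟩ := Tr_ne_aux (K := K) h hh hcard
          refine ⟨y / a 3, ?_⟩
          rw [mul_div_cancel₀ _ ha, h3]
          exact (Tr_mem_aux h hcard y).resolve_left hy
      obtain ⟨x, hx⟩ := hx
      have key : ∀ i : Fin 4, ∃ c : K, (c = 0 ∨ c = 1) ∧ Tr h (a i * x) + c = w i := by
        intro i
        rcases Tr_mem_aux h hcard (a i * x) with e | e <;> rcases hw i with e' | e' <;>
          rw [e, e']
        · exact ⟨0, by simp⟩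
        · exact ⟨1, by simp⟩
        · exact ⟨1, Or.inr rfl, h11⟩
        · exact ⟨0, by simp⟩
      choose c hc hc' using key
      refine ⟨x + c 0 * b 0 + c 1 * b 1 + c 2 * b 2, ?_⟩
      funext i
      rw [hφ, mul_add, mul_add, mul_add, Tr_add_aux, Tr_add_aux, Tr_add_aux,
        hb' _ (hc 0), hb' _ (hc 1), hb' _ (hc 2), htr, htr, htr]
      fin_cases i
      · simpa using hc' 0
      · simpa using hc' 1
      · simpa using hc' 2
      · simpa using hx
  have hcr : Nat.card φ.range = 16 := by
    have : Nat.card φ.range = (φ.range : Set (Fin 4 → K)).ncard := rfl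
    rw [this, hrange, Set.ncard_coe_finset, Fintype.card_piFinset]
    simp [Finset.card_pair]
  have hker : Nat.card φ.ker = Nat.card {s : K // ∀ i, Tr h (a i * s) = 0} := by
    refine Nat.card_congr (Equiv.subtypeEquivRight fun s => ?_)
    rw [AddMonoidHom.mem_ker, funext_iff]
    rfl
  have := AddSubgroup.card_eq_card_quotient_mul_card_addSubgroup φ.ker
  rw [Nat.card_congr (QuotientAddGroup.quotientKerEquivRange φ).toEquiv, hcr, hker,
    Nat.card_eq_fintype_card, hcard] at this
  rw [this, mul_comm]

/-- The map `(x,y,z) ↦ (x, t x + y, s x + z)`. -/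
def elaEquiv (t s : K) : (Fin 3 → K) ≃ₗ[K] (Fin 3 → K) where
  toFun v := ![v 0, t * v 0 + v 1, s * v 0 + v 2]
  invFun v := ![v 0, -t * v 0 + v 1, -s * v 0 + v 2]
  map_add' v w := by
    funext i
    fin_cases i <;> simp <;> ring
  map_smul' c v := by
    funext i
    fin_cases i <;> simp <;> ring
  left_inv v := by
    funext i
    fin_cases i <;> simp
  right_inv v := by
    funext i
    fin_cases i <;> simp

lemma elaEquiv_apply (t s : K) (v : Fin 3 → K) :
    elaEquiv t s v = ![v 0, t * v 0 + v 1, s * v 0 + v 2] := rfl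

lemma onLine_mk_aux (v : Fin 3 → K) (hv : v ≠ 0) (L : Submodule K (Fin 3 → K)) :
    OnLine (Projectivization.mk K v hv) L ↔ v ∈ L := by
  unfold OnLine
  rw [Projectivization.submodule_mk, Submodule.span_singleton_le_iff_mem]

lemma projMap_mk_aux (f : (Fin 3 → K) ≃ₗ[K] (Fin 3 → K)) (v : Fin 3 → K) (hv : v ≠ 0) :
    projMap f (Projectivization.mk K v hv) =
      Projectivization.mk K (f v) (f.map_ne_zero_iff.mpr hv) := rfl

lemma isLine_lineX0_aux : IsLine (lineX0 K) := by
  unfold IsLine lineX0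
  have h1 := LinearMap.finrank_range_add_finrank_ker
    (LinearMap.proj (R := K) (φ := fun _ : Fin 3 => K) 0)
  have h2 : LinearMap.range (LinearMap.proj (R := K) (φ := fun _ : Fin 3 => K) 0) = ⊤ :=
    LinearMap.range_eq_top.mpr (LinearMap.proj_surjective 0)
  rw [h2, finrank_top, Module.finrank_self, Module.finrank_fin_fun] at h1
  omega

lemma mem_lineX0_aux (v : Fin 3 → K) : v ∈ lineX0 K ↔ v 0 = 0 := Iff.rfl

lemma elaEquiv_elation (t s : K) : IsElationAxis (elaEquiv t s) (lineX0 K) := by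
  have hfix : ∀ P : Pt K, OnLine P (lineX0 K) → projMap (elaEquiv t s) P = P := by
    intro P
    induction P using Projectivization.ind with
    | h v hv =>
      rw [onLine_mk_aux, mem_lineX0_aux, projMap_mk_aux]
      intro h0
      congr 1
      rw [elaEquiv_apply]
      funext i
      fin_cases i <;> simp [h0]
  have hdec : ∀ v : Fin 3 → K, elaEquiv t s v = v + v 0 • ![0, t, s] := by
    intro v
    rw [elaEquiv_apply]
    funext i
    fin_cases i <;> simp <;> ring
  by_cases hts : (![0, t, s] : Fin 3 → K) = 0
  · refine ⟨Projectivization.mk K ![0, 1, 0] (fun h0 => by simpa using congrFun h0 1),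
      isLine_lineX0_aux, ?_, hfix, ?_⟩
    · rw [onLine_mk_aux, mem_lineX0_aux]; rfl
    · intro M _ _ P
      induction P using Projectivization.ind with
      | h v hv =>
        rw [onLine_mk_aux, projMap_mk_aux, onLine_mk_aux, hdec, hts]
        simp
  · refine ⟨Projectivization.mk K ![0, t, s] hts, isLine_lineX0_aux, ?_, hfix, ?_⟩
    · rw [onLine_mk_aux, mem_lineX0_aux]; rfl
    · intro M _ hR P
      induction P using Projectivization.ind with
      | h v hv =>
        rw [onLine_mk_aux] at hR
        rw [onLine_mk_aux, projMap_mk_aux, onLine_mk_aux, hdec]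
        intro hvM
        exact M.add_mem hvM (M.smul_mem _ hR)

lemma elaEquiv_maps [CharP K 2] (h : ℕ) (a : Fin 4 → K) (α : K) (b : Fin 3 → K) (s k : K)
    (hs : ∀ i, Tr h (a i * s) = 0) (hk : k = 0 ∨ k = 1) (P : Pt K) (hP : P ∈ q16Arc h a α b) :
    projMap (elaEquiv (k * a 3) s) P ∈ q16Arc h a α b := by
  have h11 : (1 : K) + 1 = 0 := CharTwo.add_self_eq_zero 1
  rcases hP with ⟨x, h0, h1, h2, h3, rfl⟩ | ⟨l, hl, s', hs', rfl⟩
  · refine Or.inl ⟨x, h0, h1, h2, h3, ?_⟩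
    unfold pt3
    rw [projMap_mk_aux]
    congr 1
    rw [elaEquiv_apply]
    simp
  · refine Or.inr ⟨![l 0, l 1, l 2, l 3 + k], ?_, s + s', ?_, ?_⟩
    · intro i
      fin_cases i
      · exact hl 0
      · exact hl 1
      · exact hl 2
      · show l 3 + k = 0 ∨ l 3 + k = 1
        rcases hl 3 with e | e <;> rcases hk with e' | e' <;> rw [e, e'] <;> simp [h11]
    · intro i
      rw [mul_add, Tr_add_aux, hs, hs', add_zero]
    · unfold pt3
      rw [projMap_mk_aux]
      congr 1
      rw [elaEquiv_apply]
      funext i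
      fin_cases i <;> simp <;> ring

lemma elaEquiv_stab [CharP K 2] (h : ℕ) (a : Fin 4 → K) (α : K) (b : Fin 3 → K) (s k : K)
    (hs : ∀ i, Tr h (a i * s) = 0) (hk : k = 0 ∨ k = 1) :
    Stabilises (elaEquiv (k * a 3) s) (q16Arc h a α b) := by
  have hm := elaEquiv_maps h a α b s k hs hk
  refine Set.Subset.antisymm ?_ ?_
  · rintro _ ⟨P, hP, rfl⟩
    exact hm P hP
  · intro P hP
    refine ⟨_, hm P hP, ?_⟩
    induction P using Projectivization.ind with
    | h v hv =>
      rw [projMap_mk_aux, projMap_mk_aux]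
      congr 1
      rw [elaEquiv_apply, elaEquiv_apply]
      funext i
      fin_cases i <;> simp [← add_assoc, CharTwo.add_self_eq_zero]

lemma ela_params_aux (t s t' s' : K) (e : elaEquiv t s = elaEquiv t' s') : t = t' ∧ s = s' := by
  have h1 := congrArg (fun f : (Fin 3 → K) ≃ₗ[K] (Fin 3 → K) => f ![1, 0, 0]) e
  simp only [elaEquiv_apply] at h1
  exact ⟨by simpa using congrFun h1 1, by simpa using congrFun h1 2⟩

/-- Theorem 5.5: the maps `(x:y:z) ↦ (x : kα₄x + y : sx + z)`, `s ∈ S`,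
`k ∈ F₂`, stabilise the `q/16`-construction and are elations with axis `X = 0`; they
form a group of elations of order `q/8` stabilising the arc. -/
theorem q16_elation_group
    {K : Type*} [Field K] [Fintype K] (h : ℕ) (hh : 5 < h)
    (hcard : Fintype.card K = 2 ^ h)
    (a : Fin 4 → K) (α : K) (b : Fin 3 → K)
    (hind : F2Indep a) (ha : ∀ i, a i ≠ 0)
    (hsq1 : a 0 ^ 2 / a 3 ∈ F2Span a)
    (hsq2 : a 1 ^ 2 / a 3 ∈ F2Span a)
    (hsq3 : a 2 ^ 2 / a 3 ∈ F2Span a)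
    (hαmem : α ∈ F2Span a)
    (hαind : F2Indep ![a 0 * (a 0 + a 3), a 1 * (a 1 + a 3), a 2 * (a 2 + a 3), a 3 * α])
    (hb : ∀ i, b i ≠ 0)
    (htr : ∀ (i : Fin 4) (j : Fin 3),
      Tr h (a i * b j) = if (i : ℕ) = (j : ℕ) then 1 else 0) :
    (∀ s k : K, (∀ i, Tr h (a i * s) = 0) → (k = 0 ∨ k = 1) →
      ∃ f : (Fin 3 → K) ≃ₗ[K] (Fin 3 → K),
        (∀ v : Fin 3 → K, f v = ![v 0, k * a 3 * v 0 + v 1, s * v 0 + v 2]) ∧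
        IsElationAxis f (lineX0 K) ∧ Stabilises f (q16Arc h a α b)) ∧
    ∃ G : Subgroup ((Fin 3 → K) ≃ₗ[K] (Fin 3 → K)),
      Nat.card G = 2 ^ h / 8 ∧
      (∀ f : (Fin 3 → K) ≃ₗ[K] (Fin 3 → K), f ∈ G ↔
        ∃ s k : K, (∀ i, Tr h (a i * s) = 0) ∧ (k = 0 ∨ k = 1) ∧
          ∀ v : Fin 3 → K, f v = ![v 0, k * a 3 * v 0 + v 1, s * v 0 + v 2]) ∧
      ∀ f ∈ G, IsElationAxis f (lineX0 K) ∧ Stabilises f (q16Arc h a α b) := by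
  haveI : Fact (Nat.Prime 2) := ⟨Nat.prime_two⟩
  haveI : CharP K 2 := charP_of_card_eq_prime_pow hcard
  have h11 : (1 : K) + 1 = 0 := CharTwo.add_self_eq_zero 1
  have hadd : ∀ k k' : K, (k = 0 ∨ k = 1) → (k' = 0 ∨ k' = 1) → (k + k' = 0 ∨ k + k' = 1) := by
    rintro k k' (rfl | rfl) (rfl | rfl) <;> simp [h11]
  have heq : ∀ (f : (Fin 3 → K) ≃ₗ[K] (Fin 3 → K)) (t s : K),
      (∀ v : Fin 3 → K, f v = ![v 0, t * v 0 + v 1, s * v 0 + v 2]) → f = elaEquiv t s := by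
    intro f t s hf
    exact LinearEquiv.ext hf
  refine ⟨fun s k hs hk => ⟨elaEquiv (k * a 3) s, fun v => rfl, elaEquiv_elation _ _,
    elaEquiv_stab h a α b s k hs hk⟩, ?_⟩
  let G : Subgroup ((Fin 3 → K) ≃ₗ[K] (Fin 3 → K)) :=
    { carrier := {f | ∃ s k : K, (∀ i, Tr h (a i * s) = 0) ∧ (k = 0 ∨ k = 1) ∧
          ∀ v : Fin 3 → K, f v = ![v 0, k * a 3 * v 0 + v 1, s * v 0 + v 2]}
      mul_mem' := by
        rintro f g ⟨s, k, hs, hk, hf⟩ ⟨s', k', hs', hk', hg⟩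
        refine ⟨s + s', k + k', ?_, hadd k k' hk hk', ?_⟩
        · intro i
          rw [mul_add, Tr_add_aux, hs, hs', add_zero]
        · intro v
          rw [LinearEquiv.mul_apply, hf, hg]
          funext i
          fin_cases i <;> simp <;> ring
      one_mem' := by
        refine ⟨0, 0, ?_, Or.inl rfl, ?_⟩
        · intro i
          rw [mul_zero, Tr_zero_aux]
        · intro v
          funext i
          fin_cases i <;> simp
      inv_mem' := by
        rintro f ⟨s, k, hs, hk, hf⟩
        refine ⟨s, k, hs, hk, ?_⟩
        intro v
        apply f.injective
        have e : f (f⁻¹ v) = v := f.apply_symm_apply v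
        rw [e, hf]
        funext i
        fin_cases i <;> simp [← add_assoc, CharTwo.add_self_eq_zero] }
  have hG : ∀ f : (Fin 3 → K) ≃ₗ[K] (Fin 3 → K), f ∈ G ↔
        ∃ s k : K, (∀ i, Tr h (a i * s) = 0) ∧ (k = 0 ∨ k = 1) ∧
          ∀ v : Fin 3 → K, f v = ![v 0, k * a 3 * v 0 + v 1, s * v 0 + v 2] := fun f => Iff.rfl
  refine ⟨G, ?_, hG, ?_⟩
  · have hS := card_S_aux h (by omega) hcard a b (ha 3) htr
    let F : {s : K // ∀ i, Tr h (a i * s) = 0} × Bool → G := fun p =>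
      ⟨elaEquiv ((if p.2 then 1 else 0) * a 3) p.1.1,
        ⟨p.1.1, if p.2 then 1 else 0, p.1.2, by cases p.2 <;> simp, fun v => rfl⟩⟩
    have hF : Function.Bijective F := by
      constructor
      · rintro ⟨⟨s, hs⟩, k⟩ ⟨⟨s', hs'⟩, k'⟩ e
        obtain ⟨e1, e2⟩ := ela_params_aux _ _ _ _ (congrArg Subtype.val e)
        have e3 := mul_right_cancel₀ (ha 3) e1
        simp only at e2
        subst e2
        cases k <;> cases k' <;> simp at e3 ⊢
      · rintro ⟨f, s, k, hs, hk, hf⟩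
        rcases hk with rfl | rfl
        · exact ⟨(⟨s, hs⟩, false), Subtype.ext (by simpa [F] using (heq f _ _ hf).symm)⟩
        · exact ⟨(⟨s, hs⟩, true), Subtype.ext (by simpa [F] using (heq f _ _ hf).symm)⟩
    rw [← Nat.card_eq_of_bijective F hF, Nat.card_prod, ← hS]
    simp only [Nat.card_eq_fintype_card, Fintype.card_bool]
    omega
  · rintro f ⟨s, k, hs, hk, hf⟩
    rw [heq f _ _ hf]
    exact ⟨elaEquiv_elation _ _, elaEquiv_stab h a α b s k hs hk⟩
end
end

section
/- Let q = 2^h and let T be a subgroup of the additive group (F_q,+) with |T| = 16, 1 ∈ T, and x² ∈ T for every x ∈ T. Then one of the following holds: (i) 4 divides h and T = {x ∈ F_q : x^16 = x}, the subfield F_16 of F_q; (ii) 6 divides h and T = {a + b : a, b ∈ F_q, a^4 = a, b^8 = b}, i.e. T = F_4 + F_8; (iii) 7 divides h and there exists z ∈ F_q with z^7 = z + 1 such that T = ⟨1, z, z², z⁴⟩ or T = ⟨1, z^11, z^22, z^44⟩ (F_2-spans). In particular such a subgroup T can exist only if 4, 6 or 7 divides h. -/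
open scoped Classical

noncomputable section

variable {K : Type*} [Field K]

theorem aux_ncard_roots {K : Type*} [Field K] (P : Polynomial K) (hP : P ≠ 0) :
    {x : K | P.eval x = 0}.ncard ≤ P.natDegree := by
  have e : {x : K | P.eval x = 0} = (P.roots.toFinset : Set K) := by
    ext x
    simp [hP]
  rw [e, Set.ncard_coe_finset]
  exact (Multiset.toFinset_card_le _).trans (Polynomial.card_roots' P)

theorem aux_eq_roots {K : Type*} [Field K] [Finite K] (T : AddSubgroup K)
    (hT16 : Nat.card T = 16) (P : Polynomial K) (hP : P ≠ 0) (hd : P.natDegree ≤ 16)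
    (hz : ∀ x ∈ T, P.eval x = 0) : (T : Set K) = {x : K | P.eval x = 0} := by
  have hsub : (T : Set K) ⊆ {x : K | P.eval x = 0} := fun x hx => hz x hx
  refine Set.eq_of_subset_of_ncard_le hsub ?_ (Set.toFinite _)
  have h1 := aux_ncard_roots P hP
  have h2 : (T : Set K).ncard = 16 := hT16
  omega

/-- A common period of the squaring map on `T` divides out to at least `4`. -/
theorem aux_gcd {K : Type*} [Field K] [Fintype K] (h : ℕ)
    (hcard : Fintype.card K = 2 ^ h)
    (T : AddSubgroup K) (hT16 : Nat.card T = 16) (n : ℕ) (hn : 0 < n)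
    (hper : ∀ x ∈ T, x ^ 2 ^ n = x) : 4 ≤ n.gcd h := by
  have key : ∀ x ∈ T, x ^ 2 ^ (n.gcd h) = x := by
    intro x hx
    have it : ∀ k : ℕ, (fun y : K => y ^ 2)^[k] x = x ^ 2 ^ k := by
      intro k
      rw [pow_iterate]
    have h1 : Function.IsPeriodicPt (fun y : K => y ^ 2) n x := by
      unfold Function.IsPeriodicPt Function.IsFixedPt
      rw [it]; exact hper x hx
    have h2 : Function.IsPeriodicPt (fun y : K => y ^ 2) h x := by
      unfold Function.IsPeriodicPt Function.IsFixedPt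
      rw [it, ← hcard]; exact FiniteField.pow_card x
    have h3 := h1.gcd h2
    unfold Function.IsPeriodicPt Function.IsFixedPt at h3
    rwa [it] at h3
  have hpos : 0 < n.gcd h := Nat.gcd_pos_of_pos_left _ hn
  generalize n.gcd h = d at key hpos
  by_contra hlt
  have hd : (Polynomial.X ^ 2 ^ d - Polynomial.X : Polynomial K).natDegree = 2 ^ d :=
    FiniteField.X_pow_card_pow_sub_X_natDegree_eq K hpos.ne' (by norm_num)
  have hne : (Polynomial.X ^ 2 ^ d - Polynomial.X : Polynomial K) ≠ 0 :=
    FiniteField.X_pow_card_pow_sub_X_ne_zero K hpos.ne' (by norm_num)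
  have hb := aux_ncard_roots _ hne
  have hle : 2 ^ d ≤ 2 ^ 3 := Nat.pow_le_pow_right (by norm_num) (by omega)
  have hsub : (T : Set K) ⊆
      {x : K | (Polynomial.X ^ 2 ^ d - Polynomial.X : Polynomial K).eval x = 0} := by
    intro x hx
    simp [key x hx]
  have h2 : (T : Set K).ncard = 16 := hT16
  have h3 := Set.ncard_le_ncard hsub (Set.toFinite _)
  omega

theorem aux_span {K : Type*} [Field K] [Finite K] [CharP K 2] (T : AddSubgroup K)
    (hT16 : Nat.card T = 16) (v : Fin 4 → K) (hv : ∀ i, v i ∈ T) (hi : F2Indep v) :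
    (T : Set K) = F2Span v := by
  symm
  apply Set.eq_of_subset_of_ncard_le _ _ (Set.toFinite _)
  · rintro x ⟨c, hc, rfl⟩
    apply AddSubgroup.sum_mem
    intro i _
    rcases hc i with h | h <;> simp [h, hv i]
  · have h2 : (T : Set K).ncard = 16 := hT16
    rw [h2]
    let g : Bool → K := fun b => if b then 1 else 0
    let f : (Fin 4 → Bool) → K := fun c => ∑ i, g (c i) * v i
    have hf : Function.Injective f := by
      intro c d hcd
      have h0 : ∑ i, (g (c i) - g (d i)) * v i = 0 := by
        simp only [sub_mul, Finset.sum_sub_distrib]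
        exact sub_eq_zero.mpr hcd
      have h1 := hi (fun i => g (c i) - g (d i)) (by
        intro i
        cases c i <;> cases d i <;> simp [g, CharTwo.neg_eq]) h0
      funext i
      have h3 := h1 i
      revert h3
      cases c i <;> cases d i <;> simp [g]
    have hr : Set.range f ⊆ F2Span v := by
      rintro _ ⟨c, rfl⟩
      refine ⟨fun i => g (c i), ?_, rfl⟩
      intro i
      cases c i <;> simp [g]
    have h3 := Set.ncard_le_ncard hr (Set.toFinite _)
    have h4 : (Set.range f).ncard = 16 := by
      rw [← Set.image_univ, Set.ncard_image_of_injective _ hf, Set.ncard_univ]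
      simp
    omega

set_option maxHeartbeats 2000000 in
/-- Cayley–Hamilton for the squaring map on `T`. -/
theorem aux_cases {K : Type*} [Field K] [Fintype K] [CharP K 2]
    (T : AddSubgroup K) (hT16 : Nat.card T = 16) (h1T : (1 : K) ∈ T)
    (hsq : ∀ x ∈ T, x ^ 2 ∈ T) :
    (∀ x ∈ T, x ^ 16 + x = 0) ∨ (∀ x ∈ T, x ^ 16 + x ^ 8 + x ^ 4 + x = 0) ∨
    (∀ x ∈ T, x ^ 16 + x ^ 8 + x ^ 2 + x = 0) ∨ (∀ x ∈ T, x ^ 16 + x ^ 4 + x ^ 2 + x = 0) := by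
  let _ : Module (ZMod 2) T := AddCommGroup.zmodModule (n := 2) (by
    intro x
    ext
    simp [two_nsmul, CharTwo.add_self_eq_zero])
  let φ0 : T →+ T :=
    { toFun := fun x => ⟨(x : K) ^ 2, hsq x x.2⟩
      map_zero' := by ext; simp
      map_add' := by
        intro x y
        ext
        simp [CharTwo.add_sq] }
  let φ : Module.End (ZMod 2) T := φ0.toZModLinearMap 2
  have φe : ∀ x : T, ((φ x : T) : K) = (x : K) ^ 2 := fun x => rfl
  have hfr : Module.finrank (ZMod 2) T = 4 := by
    have h1 := Module.natCard_eq_pow_finrank (K := ZMod 2) (V := T)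
    rw [hT16, Nat.card_zmod] at h1
    exact (Nat.pow_right_injective (le_refl 2) (h1.symm.trans (by norm_num : 16 = 2 ^ 4)))
  set p := LinearMap.charpoly φ with hp
  have hdeg : p.natDegree = 4 := by rw [hp, LinearMap.charpoly_natDegree, hfr]
  have hmon : p.coeff 4 = 1 := by
    have := LinearMap.charpoly_monic φ
    rw [← hp, Polynomial.Monic, Polynomial.leadingCoeff, hdeg] at this
    exact this
  have hae : Polynomial.aeval φ p = 0 := LinearMap.aeval_self_charpoly φ
  have h1 : p.eval 1 = 0 := by
    have : Module.End.HasEigenvalue φ 1 := by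
      apply Module.End.hasEigenvalue_of_hasEigenvector (x := (⟨1, h1T⟩ : T))
      rw [Module.End.hasEigenvector_iff, Module.End.mem_eigenspace_iff]
      constructor
      · ext
        rw [φe]
        simp
      · intro h0
        simpa using congrArg Subtype.val h0
    exact (Module.End.hasEigenvalue_iff_isRoot_charpoly φ 1).1 this
  have h0 : p.coeff 0 ≠ 0 := by
    intro hc
    have hr : p.IsRoot 0 := by
      rw [Polynomial.IsRoot, ← Polynomial.coeff_zero_eq_eval_zero, hc]
    have hev := (Module.End.hasEigenvalue_iff_isRoot_charpoly φ 0).2 hr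
    obtain ⟨x, hx⟩ := hev.exists_hasEigenvector
    rw [Module.End.hasEigenvector_iff, Module.End.mem_eigenspace_iff] at hx
    apply hx.2
    have h2 := congrArg Subtype.val hx.1
    rw [φe] at h2
    ext
    simpa using h2
  rw [Polynomial.eval_eq_sum_range, hdeg] at h1
  rw [Polynomial.aeval_eq_sum_range, hdeg] at hae
  simp only [Finset.sum_range_succ, Finset.sum_range_zero, one_pow, mul_one, zero_add, hmon]
    at h1 hae
  have key : ∀ x (hx : x ∈ T), (((p.coeff 0 • φ ^ 0 + p.coeff 1 • φ ^ 1 + p.coeff 2 • φ ^ 2 +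
      p.coeff 3 • φ ^ 3 + (1 : ZMod 2) • φ ^ 4) (⟨x, hx⟩ : T) : T) : K) = 0 := by
    intro x hx
    rw [hae]
    rfl
  have f2 : ∀ x : T, (((φ ^ 2) x : T) : K) = (x : K) ^ 4 := by
    intro x
    simp only [pow_succ, pow_zero, one_mul, Module.End.mul_apply, φe]
    ring
  have f3 : ∀ x : T, (((φ ^ 3) x : T) : K) = (x : K) ^ 8 := by
    intro x
    simp only [pow_succ, pow_zero, one_mul, Module.End.mul_apply, φe]
    ring
  have f4 : ∀ x : T, (((φ ^ 4) x : T) : K) = (x : K) ^ 16 := by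
    intro x
    simp only [pow_succ, pow_zero, one_mul, Module.End.mul_apply, φe]
    ring
  clear_value p
  clear hp hae hdeg hmon
  generalize p.coeff 0 = a0 at *
  generalize p.coeff 1 = a1 at *
  generalize p.coeff 2 = a2 at *
  generalize p.coeff 3 = a3 at *
  have h01 : ∀ a : ZMod 2, a = 0 ∨ a = 1 := by decide
  have ha0 : a0 = 1 := (h01 a0).resolve_left h0
  subst ha0
  rcases h01 a1 with rfl | rfl <;> rcases h01 a2 with rfl | rfl <;> rcases h01 a3 with rfl | rfl <;>
    first
    | (exfalso; revert h1; decide)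
    | (simp only [zero_smul, one_smul, add_zero, LinearMap.add_apply, AddSubgroup.coe_add, f2, f3,
        f4, pow_one, pow_zero, φe, Module.End.one_apply] at key
       first
       | (left; intro x hx; have := key x hx; linear_combination this)
       | (right; left; intro x hx; have := key x hx; linear_combination this)
       | (right; right; left; intro x hx; have := key x hx; linear_combination this)
       | (right; right; right; intro x hx; have := key x hx; linear_combination this))

theorem aux_indep1 {K : Type*} [Field K] [CharP K 2] (z : K) (h : z ^ 7 = z + 1) :
    F2Indep ![1, z, z ^ 2, z ^ 4] := by
  intro c hc hs
  simp [Fin.sum_univ_four] at hs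
  rcases hc 0 with h0 | h0 <;> rcases hc 1 with h1 | h1 <;> rcases hc 2 with h2 | h2 <;>
    rcases hc 3 with h3 | h3 <;> rw [h0, h1, h2, h3] at hs <;>
    first
    | (exfalso; grind)
    | (intro i; fin_cases i <;> assumption)

theorem aux_indep2 {K : Type*} [Field K] [CharP K 2] (z : K) (h : z ^ 7 = z ^ 3 + 1) :
    F2Indep ![1, z, z ^ 2, z ^ 4] := by
  intro c hc hs
  simp [Fin.sum_univ_four] at hs
  rcases hc 0 with h0 | h0 <;> rcases hc 1 with h1 | h1 <;> rcases hc 2 with h2 | h2 <;>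
    rcases hc 3 with h3 | h3 <;> rw [h0, h1, h2, h3] at hs <;>
    first
    | (exfalso; grind)
    | (intro i; fin_cases i <;> assumption)

theorem aux_exists {K : Type*} [Field K] [Finite K] [CharP K 2] (T : AddSubgroup K)
    (hT16 : Nat.card T = 16) : ∃ x ∈ T, x ^ 2 + x ≠ 0 := by
  by_contra! hcon
  have hsub : (T : Set K) ⊆ {0, 1} := by
    intro x hx
    have h1 := hcon x hx
    have h2 : x * (x + 1) = 0 := by linear_combination h1
    rcases mul_eq_zero.1 h2 with h3 | h3
    · simp [h3]
    · right
      exact CharTwo.add_eq_zero.1 h3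
  have h2 : (T : Set K).ncard = 16 := hT16
  have h3 := Set.ncard_le_ncard hsub (Set.toFinite _)
  have h4 : ({0, 1} : Set K).ncard ≤ 2 := (Set.ncard_insert_le _ _).trans (by simp)
  omega

/-- classification underlying Theorem 5.12: an additive subgroup `T` of
`F_q` with `|T| = 16`, `1 ∈ T`, closed under squaring, is either `F₁₆` (with `4 ∣ h`),
or `F₄ + F₈` (with `6 ∣ h`), or one of the two spans `⟨1,z,z²,z⁴⟩`, `⟨1,z¹¹,z²²,z⁴⁴⟩`
with `z⁷ = z + 1` (with `7 ∣ h`). -/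
theorem subgroup16_classification
    {K : Type*} [Field K] [Fintype K] (h : ℕ)
    (hcard : Fintype.card K = 2 ^ h)
    (T : AddSubgroup K) (hT16 : Nat.card T = 16) (h1T : (1 : K) ∈ T)
    (hsq : ∀ x ∈ T, x ^ 2 ∈ T) :
    (4 ∣ h ∧ (T : Set K) = {x : K | x ^ 16 = x}) ∨
    (6 ∣ h ∧ (T : Set K) = {x : K | ∃ u v : K, u ^ 4 = u ∧ v ^ 8 = v ∧ x = u + v}) ∨
    (7 ∣ h ∧ ∃ z : K, z ^ 7 = z + 1 ∧
      ((T : Set K) = F2Span ![1, z, z ^ 2, z ^ 4] ∨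
       (T : Set K) = F2Span ![1, z ^ 11, z ^ 22, z ^ 44])) := by
  have h2 : (2 : K) = 0 := by
    have h1 := FiniteField.cast_card_eq_zero K
    rw [hcard] at h1
    push_cast at h1
    exact eq_zero_of_pow_eq_zero h1
  have : CharP K 2 := CharTwo.of_one_ne_zero_of_two_eq_zero one_ne_zero h2
  rcases aux_cases T hT16 h1T hsq with hc | hc | hc | hc
  · left
    constructor
    · have hg := aux_gcd h hcard T hT16 4 (by norm_num) (by
        intro x hx
        have := hc x hx
        norm_num
        exact CharTwo.add_eq_zero.1 this)
      have hd : Nat.gcd 4 h = 4 := le_antisymm (Nat.gcd_le_left _ (by norm_num)) hg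
      exact hd ▸ Nat.gcd_dvd_right 4 h
    · rw [aux_eq_roots T hT16 (Polynomial.X ^ 16 + Polynomial.X) (Polynomial.Monic.ne_zero
        (by monicity!)) (by compute_degree!) (by intro x hx; simpa using hc x hx)]
      ext x
      simp [CharTwo.add_eq_zero]
  · right; right
    obtain ⟨x, hx, hx0⟩ := aux_exists T hT16
    set z := x ^ 2 + x with hz
    have hzT : z ∈ T := T.add_mem (hsq x hx) hx
    have hz7 : z ^ 7 = z + 1 := by
      have h1 : z * (z ^ 7 + z + 1) = 0 := by
        have := hc x hx
        grind
      have h3 := (mul_eq_zero.1 h1).resolve_left hx0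
      grind
    refine ⟨?_, z, hz7, Or.inl ?_⟩
    · have hg := aux_gcd h hcard T hT16 7 (by norm_num) (by
        intro x hx
        have := hc x hx
        norm_num
        have e1 : x ^ 16 = x ^ 8 + x ^ 4 + x := by grind
        have e2 : x ^ 32 = x ^ 16 + x ^ 8 + x ^ 2 := by grind
        have e3 : x ^ 64 = x ^ 32 + x ^ 16 + x ^ 4 := by grind
        have e4 : x ^ 128 = x ^ 64 + x ^ 32 + x ^ 8 := by
          have : x ^ 128 = (x ^ 64) ^ 2 := by ring
          rw [this]
          conv_lhs => rw [e3, CharTwo.add_sq, CharTwo.add_sq]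
          ring
        rw [e4, e3, e2, e1]
        grind)
      have hd : Nat.gcd 7 h ∣ 7 := Nat.gcd_dvd_left _ _
      rcases (Nat.dvd_prime (by norm_num)).1 hd with hd | hd
      · omega
      · exact hd ▸ Nat.gcd_dvd_right 7 h
    · apply aux_span T hT16 _ _ (aux_indep1 z hz7)
      have t2 := hsq z hzT
      have t4 := hsq _ t2
      rw [← pow_mul] at t4
      intro i
      fin_cases i
      · exact h1T
      · exact hzT
      · exact t2
      · exact t4
  · right; left
    have hTe := aux_eq_roots T hT16
      (Polynomial.X ^ 16 + Polynomial.X ^ 8 + Polynomial.X ^ 2 + Polynomial.X)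
      (Polynomial.Monic.ne_zero (by monicity!)) (by compute_degree!)
      (by intro x hx; simpa using hc x hx)
    constructor
    · have hg := aux_gcd h hcard T hT16 6 (by norm_num) (by
        intro x hx
        have := hc x hx
        norm_num
        have e1 : x ^ 16 = x ^ 8 + x ^ 2 + x := by grind
        have e2 : x ^ 32 = x ^ 16 + x ^ 4 + x ^ 2 := by grind
        have e3 : x ^ 64 = x ^ 32 + x ^ 8 + x ^ 4 := by
          have : x ^ 64 = (x ^ 32) ^ 2 := by ring
          rw [this]
          conv_lhs => rw [e2, CharTwo.add_sq, CharTwo.add_sq]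
          ring
        rw [e3, e2, e1]
        grind)
      have hd : Nat.gcd 6 h ∣ 6 := Nat.gcd_dvd_left _ _
      have hle := Nat.le_of_dvd (by norm_num) hd
      have hdh := Nat.gcd_dvd_right 6 h
      generalize Nat.gcd 6 h = d at *
      interval_cases d
      · omega
      · omega
      · exact hdh
    · ext x
      constructor
      · intro hx
        have e := hc x hx
        refine ⟨x ^ 4 + x ^ 2 + x, x ^ 4 + x ^ 2, ?_, ?_, ?_⟩
        · grind
        · grind
        · grind
      · rintro ⟨u, v, hu, hv, rfl⟩
        rw [SetLike.mem_coe]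
        apply T.add_mem
        · rw [← SetLike.mem_coe, hTe]
          simp
          grind
        · rw [← SetLike.mem_coe, hTe]
          simp
          grind
  · right; right
    obtain ⟨x, hx, hx0⟩ := aux_exists T hT16
    set w := x ^ 2 + x with hw
    have hwT : w ∈ T := T.add_mem (hsq x hx) hx
    have hw7 : w ^ 7 = w ^ 3 + 1 := by
      have h1 : w * (w ^ 7 + w ^ 3 + 1) = 0 := by
        have := hc x hx
        grind
      have h3 := (mul_eq_zero.1 h1).resolve_left hx0
      grind
    clear_value w
    have hz7 : (w ^ 13) ^ 7 = w ^ 13 + 1 := by grind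
    have hz11 : (w ^ 13) ^ 11 = w ^ 16 := by grind
    have hz22 : (w ^ 13) ^ 22 = (w ^ 16) ^ 2 := by rw [← hz11]; ring
    have hz44 : (w ^ 13) ^ 44 = (w ^ 16) ^ 4 := by rw [← hz11]; ring
    refine ⟨?_, w ^ 13, hz7, Or.inr ?_⟩
    · have hg := aux_gcd h hcard T hT16 7 (by norm_num) (by
        intro x hx
        have := hc x hx
        norm_num
        have e1 : x ^ 16 = x ^ 4 + x ^ 2 + x := by grind
        have e2 : x ^ 32 = x ^ 8 + x ^ 4 + x ^ 2 := by grind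
        have e3 : x ^ 64 = x ^ 16 + x ^ 8 + x ^ 4 := by grind
        have e4 : x ^ 128 = x ^ 32 + x ^ 16 + x ^ 8 := by
          have : x ^ 128 = (x ^ 64) ^ 2 := by ring
          rw [this]
          conv_lhs => rw [e3, CharTwo.add_sq, CharTwo.add_sq]
          ring
        rw [e4, e2, e1]
        grind)
      have hd : Nat.gcd 7 h ∣ 7 := Nat.gcd_dvd_left _ _
      rcases (Nat.dvd_prime (by norm_num)).1 hd with hd | hd
      · omega
      · exact hd ▸ Nat.gcd_dvd_right 7 h
    · rw [hz11, hz22, hz44]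
      have hv7 : (w ^ 16) ^ 7 = (w ^ 16) ^ 3 + 1 := by
        grind
      have t2 := hsq w hwT
      have t4 := hsq _ t2
      have t8 := hsq _ t4
      have t16 := hsq _ t8
      simp only [← pow_mul] at t16
      norm_num at t16
      generalize w ^ 16 = z at *
      apply aux_span T hT16 _ _ (aux_indep2 z hv7)
      have s2 := hsq z t16
      have s4 := hsq _ s2
      rw [← pow_mul] at s4
      intro i
      fin_cases i
      · exact h1T
      · exact t16
      · exact s2
      · exact s4
end
end
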